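/- Let (Y_1,…,Y_{n+1}) be an irreducible Σ_q-family on a complex Hilbert space H with Y_{n+1}≠0. Then there exist λ∈ℂ with |λ|=1 and a unitary operator U: H → ℓ²(ℕⁿ) such that U Y_i U* = π_λ(Y_i) for all 1≤i≤n+1; that is, every irreducible bounded *-representation of the algebra A(Σ_q^{2n+1}) that does not annihilate the last generator is unitarily equivalent to some π_λ. -/

import Mathlib

open ContinuousLinearMap

noncomputable section

abbrev lpH (n : ℕ) : Type := lp (fun _ : Fin n → ℕ => ℂ) 2

def basisE {n : ℕ} (k : Fin n → ℕ) : lpH n := lp.single 2 k 1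

/-- A `Σ_q`-family: relations (R1)-(R5). Index `i : Fin (n+1)` corresponds to `Y_{i+1}`. -/
def IsSigmaQFamily (q : ℝ) {n : ℕ} {H : Type*} [NormedAddCommGroup H]
    [InnerProductSpace ℂ H] [CompleteSpace H]
    (Y : Fin (n + 1) → H →L[ℂ] H) : Prop :=
  (∀ i j : Fin (n + 1), j < i → ¬((i : ℕ) = n ∧ (j : ℕ) + 1 = n) →
      Y i * Y j = ((q : ℂ))⁻¹ • (Y j * Y i) ∧
      adjoint (Y i) * Y j = ((q : ℂ))⁻¹ • (Y j * adjoint (Y i))) ∧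
  (∀ j : Fin (n + 1), (j : ℕ) + 1 = n →
      Y (Fin.last n) * Y j = (((q : ℂ))⁻¹ ^ 2) • (Y j * Y (Fin.last n)) ∧
      adjoint (Y (Fin.last n)) * Y j = (((q : ℂ))⁻¹ ^ 2) • (Y j * adjoint (Y (Fin.last n)))) ∧
  (∀ i : Fin (n + 1), (i : ℕ) + 1 ≠ n →
      Y i * adjoint (Y i) - adjoint (Y i) * Y i
        = ((1 - q ^ 2 : ℝ) : ℂ) • ∑ k ∈ Finset.Ioi i, adjoint (Y k) * Y k) ∧
  (∀ i : Fin (n + 1), (i : ℕ) + 1 = n →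
      Y i * adjoint (Y i) - adjoint (Y i) * Y i
        = ((1 - q ^ 4 : ℝ) : ℂ) • (adjoint (Y (Fin.last n)) * Y (Fin.last n))) ∧
  (∑ i, adjoint (Y i) * Y i = 1)

/-- The representation `π_λ` on `ℓ²(ℕⁿ)`, described by its action on the canonical
orthonormal basis. Index `i : Fin n` (via `castSucc`) corresponds to `Y_{i+1}`,
and `Fin.last n` corresponds to `Y_{n+1}`. -/
def IsPiRep (q : ℝ) {n : ℕ} (lam : ℂ) (Y : Fin (n + 1) → lpH n →L[ℂ] lpH n) : Prop :=
  (∀ i : Fin n, (i : ℕ) + 1 < n → ∀ k : Fin n → ℕ,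
      Y i.castSucc (basisE k)
        = ((q ^ (∑ j ∈ Finset.Iio i, k j) * Real.sqrt (1 - q ^ (2 * k i)) : ℝ) : ℂ)
            • basisE (Function.update k i (k i - 1))) ∧
  (∀ i : Fin n, (i : ℕ) + 1 = n → ∀ k : Fin n → ℕ,
      Y i.castSucc (basisE k)
        = ((q ^ (∑ j ∈ Finset.Iio i, k j) * Real.sqrt (1 - q ^ (4 * k i)) : ℝ) : ℂ)
            • basisE (Function.update k i (k i - 1))) ∧
  (∀ k : Fin n → ℕ,
      Y (Fin.last n) (basisE k)
        = (lam * (q : ℂ) ^ (∑ j : Fin n, if (j : ℕ) + 1 = n then 2 * k j else k j))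
            • basisE k)

/-- Irreducibility: the only closed invariant subspaces are `⊥` and `⊤`. -/
def IsIrreducibleFamily {n : ℕ} {H : Type*} [NormedAddCommGroup H]
    [InnerProductSpace ℂ H] [CompleteSpace H]
    (Y : Fin (n + 1) → H →L[ℂ] H) : Prop :=
  ∀ V : Submodule ℂ H, IsClosed (V : Set H) →
    (∀ i : Fin (n + 1), ∀ v ∈ V, Y i v ∈ V ∧ adjoint (Y i) v ∈ V) →
    V = ⊥ ∨ V = ⊤

section PartOne

variable {H : Type*} [NormedAddCommGroup H] [InnerProductSpace ℂ H] [CompleteSpace H]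

/-- Self-adjoint intertwined operators have intertwined positive parts. -/
lemma posPart_intertwine (a b x : H →L[ℂ] H) (ha : IsSelfAdjoint a) (hb : IsSelfAdjoint b)
    (h : a * x = x * b) : a⁺ * x = x * b⁺ := by
  have key : ∀ p : Polynomial ℝ, Polynomial.aeval a p * x = x * Polynomial.aeval b p := by
    intro p
    induction p using Polynomial.induction_on' with
    | add p q hp hq => simp [add_mul, mul_add, hp, hq]
    | monomial m r =>
      have : a ^ m * x = x * b ^ m := by
        induction m with
        | zero => simp
        | succ m ih => rw [pow_succ, mul_assoc, h, ← mul_assoc, ih, mul_assoc, pow_succ]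
      rw [Polynomial.aeval_monomial, Polynomial.aeval_monomial, mul_assoc, this,
        ← mul_assoc, Algebra.commutes, mul_assoc]
  have hpa : a⁺ = cfc (fun t : ℝ => t⁺) a := by
    rw [CFC.posPart_def, cfcₙ_eq_cfc]
  have hpb : b⁺ = cfc (fun t : ℝ => t⁺) b := by
    rw [CFC.posPart_def, cfcₙ_eq_cfc]
  have near : ∀ (c : H →L[ℂ] H) (hc : IsSelfAdjoint c) (R ε : ℝ) (p : Polynomial ℝ), 0 < ε →
      ‖c‖ ≤ R → (∀ t ∈ Set.Icc (-R) R, |p.eval t - t⁺| < ε) →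
      ‖Polynomial.aeval c p - cfc (fun t : ℝ => t⁺) c‖ ≤ ε := by
    intro c hc R ε p hε hR hp
    rw [← cfc_polynomial p c hc, ← cfc_sub (p.eval) (fun t : ℝ => t⁺) c]
    refine norm_cfc_le hε.le fun t ht => ?_
    have h1 : ‖t‖ ≤ ‖c‖ := by
      have := spectrum.norm_le_norm_mul_of_mem ht
      rcases subsingleton_or_nontrivial H with hs | hs
      · have : Subsingleton (H →L[ℂ] H) := inferInstance
        exact absurd ht (by simp [spectrum.of_subsingleton])
      · simpa using this
    have h2 := hp t (by rw [Set.mem_Icc, ← abs_le]; exact h1.trans hR)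
    exact h2.le
  have hx : 0 ≤ ‖x‖ := norm_nonneg x
  rw [hpa, hpb, ← sub_eq_zero, ← norm_le_zero_iff]
  refine le_of_forall_pos_le_add fun δ hδ => ?_
  rw [zero_add]
  set ε := δ / (2 * (‖x‖ + 1)) with hε
  have hεp : 0 < ε := by positivity
  set R := max ‖a‖ ‖b‖
  obtain ⟨p, hp⟩ := exists_polynomial_near_of_continuousOn (-R) R (fun t : ℝ => t⁺)
    (by fun_prop) ε hεp
  have hA := near a ha R ε p hεp (le_max_left _ _) hp
  have hB := near b hb R ε p hεp (le_max_right _ _) hp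
  set fa := cfc (fun t : ℝ => t⁺) a
  set fb := cfc (fun t : ℝ => t⁺) b
  have e : fa * x - x * fb = x * (Polynomial.aeval b p - fb) - (Polynomial.aeval a p - fa) * x := by
    rw [mul_sub, sub_mul, key]; abel
  rw [e]
  calc _ ≤ ‖x * (Polynomial.aeval b p - fb)‖ + ‖(Polynomial.aeval a p - fa) * x‖ := norm_sub_le _ _
    _ ≤ ‖x‖ * ε + ε * ‖x‖ := by
        gcongr
        · exact (norm_mul_le _ _).trans (by gcongr)
        · exact (norm_mul_le _ _).trans (by gcongr)
    _ ≤ 2 * (‖x‖ + 1) * ε := by nlinarith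
    _ = δ := by rw [hε]; field_simp

set_option linter.unusedSectionVars false in
lemma coe_smul_op (r : ℝ) (T : H →L[ℂ] H) : ((r : ℂ)) • T = r • T := by
  ext v; simp

/-- Existence of a vacuum vector. -/
lemma exists_vacuum {ι : Type*} (T : H →L[ℂ] H) (hT : 0 ≤ T) (hT0 : T ≠ 0) (c : ι → ℝ) (r : ℝ)
    (hr : r < 1) (hc : ∀ j, 0 ≤ c j) (hcr : ∀ j, c j ≤ r) (hr0 : 0 ≤ r)
    (Y : ι → H →L[ℂ] H)
    (h : ∀ j, Y j * T = (c j : ℂ) • (T * Y j)) : ∃ v : H, v ≠ 0 ∧ ∀ j, Y j v = 0 := by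
  have hTs : IsSelfAdjoint T := IsSelfAdjoint.of_nonneg hT
  have ht : 0 < ‖T‖ := norm_pos_iff.mpr hT0
  set t := ‖T‖ with htdef
  have hle : T ≤ algebraMap ℝ (H →L[ℂ] H) t := hTs.le_algebraMap_norm_self
  have hs : ∀ s : ℝ, IsSelfAdjoint (algebraMap ℝ (H →L[ℂ] H) s) := fun s =>
    IsSelfAdjoint.algebraMap _ (IsSelfAdjoint.all s)
  set B := T - algebraMap ℝ (H →L[ℂ] H) (r * t) with hB
  have hBs : IsSelfAdjoint B := hTs.sub (hs _)
  have hBne : B⁺ ≠ 0 := by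
    intro h0
    rw [CFC.posPart_eq_zero_iff B hBs, hB, sub_nonpos] at h0
    have := CStarAlgebra.norm_le_norm_of_nonneg_of_le hT h0
    have h3 : ‖algebraMap ℝ (H →L[ℂ] H) (r * t)‖ ≤ r * t := by
      rw [Algebra.algebraMap_eq_smul_one, norm_smul, Real.norm_of_nonneg (by positivity)]
      exact mul_le_of_le_one_right (by positivity) ContinuousLinearMap.norm_id_le
    nlinarith
  obtain ⟨x, hx⟩ : ∃ x, B⁺ x ≠ 0 := by
    by_contra! hcon
    exact hBne (by ext x; simp [hcon x])
  refine ⟨B⁺ x, hx, fun j => ?_⟩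
  have hC : IsSelfAdjoint (c j • T - algebraMap ℝ (H →L[ℂ] H) (r * t)) :=
    (IsSelfAdjoint.smul (IsSelfAdjoint.all _) hTs).sub (hs _)
  have h1 := posPart_intertwine (c j • T - algebraMap ℝ (H →L[ℂ] H) (r * t)) B (Y j) hC hBs (by
    rw [hB, mul_sub, sub_mul, h, Algebra.commutes, coe_smul_op, smul_mul_assoc])
  have h2 : (c j • T - algebraMap ℝ (H →L[ℂ] H) (r * t))⁺ = 0 := by
    rw [CFC.posPart_eq_zero_iff _ hC, sub_nonpos]
    calc c j • T ≤ c j • algebraMap ℝ (H →L[ℂ] H) t := smul_le_smul_of_nonneg_left hle (hc j)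
      _ = algebraMap ℝ (H →L[ℂ] H) (c j * t) := by
        rw [Algebra.algebraMap_eq_smul_one, Algebra.algebraMap_eq_smul_one, smul_smul]
      _ ≤ _ := algebraMap_mono _ (by have := hcr j; gcongr)
  rw [h2, zero_mul] at h1
  exact (DFunLike.congr_fun h1 x).symm

/-- A self-adjoint operator which commutes with an irreducible family up to positive scalars
is definite. -/
lemma definite_of_irreducible {n : ℕ} (Y : Fin (n + 1) → H →L[ℂ] H) (hirr : IsIrreducibleFamily Y)
    (A : H →L[ℂ] H) (hA : IsSelfAdjoint A)
    (h1 : ∀ i, ∃ c : ℝ, 0 ≤ c ∧ A * Y i = (c : ℂ) • (Y i * A))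
    (h2 : ∀ i, ∃ c : ℝ, 0 ≤ c ∧ A * adjoint (Y i) = (c : ℂ) • (adjoint (Y i) * A)) :
    0 ≤ A ∨ A ≤ 0 := by
  have key : ∀ (x : H →L[ℂ] H) (c : ℝ), 0 ≤ c → A * x = (c : ℂ) • (x * A) →
      A⁺ * x = (c : ℂ) • (x * A⁺) := by
    intro x c hc h
    have := posPart_intertwine A (c • A) x hA (IsSelfAdjoint.smul (IsSelfAdjoint.all _) hA)
      (by rw [h, coe_smul_op, mul_smul_comm])
    rw [this, CFC.posPart_smul_of_nonneg hc, coe_smul_op, mul_smul_comm]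
  have ker : ∀ (x : H →L[ℂ] H) (c : ℝ), A⁺ * x = (c : ℂ) • (x * A⁺) → ∀ v, A⁺ v = 0 →
      A⁺ (x v) = 0 := by
    intro x c h v hv
    have := DFunLike.congr_fun h v
    simpa [hv] using this
  have hcl : IsClosed ((LinearMap.ker (A⁺ : H →L[ℂ] H).toLinearMap : Submodule ℂ H) : Set H) :=
    (A⁺ : H →L[ℂ] H).isClosed_ker
  rcases hirr (LinearMap.ker (A⁺ : H →L[ℂ] H).toLinearMap) hcl (by
    intro i v hv
    obtain ⟨c, hc, h⟩ := h1 i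
    obtain ⟨c', hc', h'⟩ := h2 i
    exact ⟨ker _ c (key _ c hc h) v hv, ker _ c' (key _ c' hc' h') v hv⟩) with h | h
  · left
    rw [← CFC.negPart_eq_zero_iff A hA]
    ext x
    have h3 : (A⁻ : H →L[ℂ] H) x ∈ LinearMap.ker (A⁺ : H →L[ℂ] H).toLinearMap := by
      have := DFunLike.congr_fun (CFC.posPart_mul_negPart A) x
      exact this
    rw [h, Submodule.mem_bot] at h3
    simpa using h3
  · right
    rw [← CFC.posPart_eq_zero_iff A hA]
    ext x
    have h3 : x ∈ LinearMap.ker (A⁺ : H →L[ℂ] H).toLinearMap := by rw [h]; trivial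
    simpa using h3

end PartOne

section PartTwo

variable {H : Type*} [NormedAddCommGroup H] [InnerProductSpace ℂ H] [CompleteSpace H]

/-- Uniform version of the relations, with `a j = q` or `q ^ 2`. -/
structure SigmaRel {n : ℕ} (a : Fin n → ℝ) (Y : Fin (n + 1) → H →L[ℂ] H) : Prop where
  pos : ∀ j, 0 < a j
  lt1 : ∀ j, a j < 1
  r1 : ∀ (j : Fin n) (i : Fin (n + 1)), j.castSucc < i →
    Y j.castSucc * Y i = (a j : ℂ) • (Y i * Y j.castSucc)
  r2 : ∀ (j : Fin n) (i : Fin (n + 1)), j.castSucc < i →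
    Y j.castSucc * star (Y i) = (a j : ℂ) • (star (Y i) * Y j.castSucc)
  r3 : ∀ j : Fin n, Y j.castSucc * star (Y j.castSucc) = star (Y j.castSucc) * Y j.castSucc +
    (1 - (a j : ℂ) ^ 2) • ∑ k ∈ Finset.Ioi j.castSucc, star (Y k) * Y k
  r4 : Y (Fin.last n) * star (Y (Fin.last n)) = star (Y (Fin.last n)) * Y (Fin.last n)
  r5 : ∑ i, star (Y i) * Y i = 1

namespace SigmaRel

variable {n : ℕ} {a : Fin n → ℝ} {Y : Fin (n + 1) → H →L[ℂ] H}

lemma s1 (h : SigmaRel a Y) (j : Fin n) (i : Fin (n + 1)) (hij : j.castSucc < i) :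
    star (Y i) * star (Y j.castSucc) = (a j : ℂ) • (star (Y j.castSucc) * star (Y i)) := by
  have := congrArg star (h.r1 j i hij)
  simpa [star_smul] using this

lemma s2 (h : SigmaRel a Y) (j : Fin n) (i : Fin (n + 1)) (hij : j.castSucc < i) :
    Y i * star (Y j.castSucc) = (a j : ℂ) • (star (Y j.castSucc) * Y i) := by
  have := congrArg star (h.r2 j i hij)
  simpa [star_smul] using this

/-- Eigenvector in the vacuum space. -/
lemma exists_vacuum_eigen (h : SigmaRel a Y) (r : ℝ) (hr0 : 0 ≤ r) (hr : r < 1) (har : ∀ j, a j ≤ r)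
    (hirr : IsIrreducibleFamily Y) (hne : Y (Fin.last n) ≠ 0) :
    ∃ (lam : ℂ) (v : H), ‖lam‖ = 1 ∧ ‖v‖ = 1 ∧ (∀ j : Fin n, Y j.castSucc v = 0) ∧
      Y (Fin.last n) v = lam • v := by
  set X := Y (Fin.last n) with hX
  have hlt : ∀ j : Fin n, j.castSucc < Fin.last n := fun j => Fin.castSucc_lt_last j
  obtain ⟨v, hv0, hv⟩ := exists_vacuum (star X * X) (star_mul_self_nonneg X)
    (by rwa [Ne, CStarRing.star_mul_self_eq_zero_iff]) (fun j : Fin n => a j ^ 2) r hr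
    (fun j => by positivity)
    (fun j => by have := h.pos j; have := h.lt1 j; have := har j; nlinarith) hr0
    (fun j => Y j.castSucc) (by
      intro j
      rw [← mul_assoc, h.r2 j _ (hlt j), smul_mul_assoc, mul_assoc, h.r1 j _ (hlt j),
        mul_smul_comm, smul_smul, ← mul_assoc]
      congr 1
      push_cast; ring)
  have hXX : star X (X v) = v := by
    have := DFunLike.congr_fun h.r5 v
    rw [Fin.sum_univ_castSucc] at this
    simpa [hv] using this
  have hXX' : X (star X v) = v := by
    exact (DFunLike.congr_fun h.r4 v).trans hXX
  have hxy : ∀ j : Fin n, Y j.castSucc (X v) = 0 := by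
    intro j
    have := DFunLike.congr_fun (h.r1 j _ (hlt j)) v
    simpa [hv] using this
  -- reduce to a nonzero vector
  suffices hs : ∃ (lam : ℂ) (v : H), ‖lam‖ = 1 ∧ v ≠ 0 ∧ (∀ j : Fin n, Y j.castSucc v = 0) ∧
      X v = lam • v by
    obtain ⟨lam, v, h1, h2, h3, h4⟩ := hs
    refine ⟨lam, ((‖v‖⁻¹ : ℝ) : ℂ) • v, h1, ?_, fun j => by simp [h3], ?_⟩
    · rw [norm_smul]
      have : ‖v‖ ≠ 0 := norm_ne_zero_iff.mpr h2
      simp [this]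
    · rw [map_smul, h4, smul_comm]
  obtain ⟨z, hz, hzw⟩ : ∃ z : ℂ, ‖z‖ = 1 ∧ (z * inner ℂ v (X v)).re = 0 := by
    set w := inner ℂ v (X v)
    by_cases hw : w = 0
    · exact ⟨1, by simp, by simp [hw]⟩
    · have hw' : (‖w‖ : ℂ) ≠ 0 := by simpa using hw
      refine ⟨Complex.I * (starRingEnd ℂ w) / ‖w‖, ?_, ?_⟩
      · simp [hw]
      · have : Complex.I * (starRingEnd ℂ w) / ‖w‖ * w = Complex.I * (‖w‖ : ℂ) := by
          rw [div_mul_eq_mul_div, mul_assoc, mul_comm (starRingEnd ℂ w), Complex.mul_conj']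
          field_simp
        rw [this]; simp
  have hz0 : z ≠ 0 := by rintro rfl; simp at hz
  set zb := starRingEnd ℂ z with hzb
  have hzz : z * zb = 1 := by rw [hzb, Complex.mul_conj']; simp [hz]
  set A : H →L[ℂ] H := z • X + zb • star X with hA
  have hAs : IsSelfAdjoint A := by
    rw [IsSelfAdjoint, hA]
    simp [star_smul, hzb, add_comm]
  have hdef := definite_of_irreducible Y hirr A hAs (by
      intro i
      rcases Fin.eq_castSucc_or_eq_last i with ⟨j, rfl⟩ | rfl
      · refine ⟨(a j)⁻¹, by have := h.pos j; positivity, ?_⟩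
        have ha : (a j : ℂ) ≠ 0 := by have := (h.pos j).ne'; exact_mod_cast this
        rw [hA, add_mul, mul_add, smul_mul_assoc, smul_mul_assoc, mul_smul_comm, mul_smul_comm,
          h.r1 j _ (hlt j), h.r2 j _ (hlt j)]
        ext x
        simp only [Complex.ofReal_inv, smul_add, smul_smul, _root_.add_apply,
          _root_.smul_apply]
        congr 2 <;> field_simp
      · refine ⟨1, by simp, ?_⟩
        rw [hA, add_mul, mul_add, smul_mul_assoc, smul_mul_assoc, mul_smul_comm, mul_smul_comm,
          h.r4]
        simp [hX])
    (by
      intro i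
      rw [← star_eq_adjoint]
      rcases Fin.eq_castSucc_or_eq_last i with ⟨j, rfl⟩ | rfl
      · refine ⟨a j, (h.pos j).le, ?_⟩
        rw [hA, add_mul, mul_add, smul_mul_assoc, smul_mul_assoc, mul_smul_comm, mul_smul_comm,
          h.s1 j _ (hlt j), h.s2 j _ (hlt j), smul_add, smul_comm z, smul_comm zb]
      · refine ⟨1, by simp, ?_⟩
        rw [hA, add_mul, mul_add, smul_mul_assoc, smul_mul_assoc, mul_smul_comm, mul_smul_comm,
          h.r4]
        simp [hX])
  have hin : inner ℂ v (A v) = 0 := by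
    have e1 : inner ℂ v (star X v) = starRingEnd ℂ (inner ℂ v (X v)) := by
      rw [star_eq_adjoint, adjoint_inner_right, inner_conj_symm]
    have : inner ℂ v (A v) = z * inner ℂ v (X v) + starRingEnd ℂ (z * inner ℂ v (X v)) := by
      rw [hA, _root_.add_apply, inner_add_right, _root_.smul_apply,
        _root_.smul_apply, inner_smul_right, inner_smul_right, e1, map_mul]
    rw [this, Complex.add_conj, hzw]; simp
  have hpos : ∀ B : H →L[ℂ] H, 0 ≤ B → inner ℂ v (B v) = 0 → B v = 0 := by
    intro B hB h0
    obtain ⟨b, rfl⟩ := CStarAlgebra.nonneg_iff_eq_star_mul_self.mp hB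
    have : inner ℂ (b v) (b v) = 0 := by
      rw [← h0, mul_apply_eq_comp, star_eq_adjoint, adjoint_inner_right]
    rw [inner_self_eq_zero] at this
    simp [this]
  have hAv : A v = 0 := by
    rcases hdef with hd | hd
    · exact hpos A hd hin
    · have := hpos (-A) (neg_nonneg.mpr hd) (by simp [hin])
      simpa using this
  have e2 : z • X (X v) = - zb • v := by
    have := congrArg X hAv
    rw [hA] at this
    simp only [_root_.add_apply, _root_.smul_apply, map_add, map_smul,
      hXX', map_zero] at this
    rw [neg_smul]
    exact eq_neg_of_add_eq_zero_left this
  set mu := Complex.I * zb with hmu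
  have hmun : ‖mu‖ = 1 := by simp [hmu, hzb, hz]
  have e3 : X (X v) = (mu * mu) • v := by
    have e4 : zb • (z • X (X v)) = zb • (- zb • v) := by rw [e2]
    rw [smul_smul, smul_smul, mul_comm zb z, hzz, one_smul] at e4
    rw [e4]
    congr 1
    rw [hmu]
    linear_combination (-zb ^ 2) * Complex.I_mul_I
  by_cases hv' : X v + mu • v = 0
  · refine ⟨-mu, v, by simpa using hmun, hv0, hv, ?_⟩
    rw [neg_smul]; exact eq_neg_of_add_eq_zero_left hv'
  · refine ⟨mu, X v + mu • v, hmun, hv', fun j => by simp [hv, hxy], ?_⟩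
    rw [map_add, map_smul, e3, smul_add, smul_smul, add_comm]

end SigmaRel

end PartTwo

section PartThree

variable {H : Type*} [NormedAddCommGroup H] [InnerProductSpace ℂ H] [CompleteSpace H]

/-- Induction on multi-indices. -/
lemma tuple_induction {n : ℕ} {P : (Fin n → ℕ) → Prop} (h0 : P 0)
    (hs : ∀ k i, P k → P (k + Pi.single i 1)) : ∀ k, P k := by
  intro k
  induction hm : ∑ i, k i generalizing k with
  | zero =>
    have : k = 0 := by
      funext i
      exact (Finset.sum_eq_zero_iff.mp hm) i (Finset.mem_univ i)
    rwa [this]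
  | succ m ih =>
    obtain ⟨i, -, hi⟩ : ∃ i ∈ Finset.univ, k i ≠ 0 := by
      apply Finset.exists_ne_zero_of_sum_ne_zero
      omega
    have hk : k = (k - Pi.single i 1) + Pi.single i 1 := by
      funext j
      by_cases hj : j = i
      · subst hj; simp; omega
      · simp [hj]
    have hsum : ∑ j, (k - Pi.single i 1 : Fin n → ℕ) j = m := by
      have h2 : ∑ j, k j = ∑ j, (k - Pi.single i 1 : Fin n → ℕ) j + 1 := by
        conv_lhs => rw [hk]
        simp [Finset.sum_add_distrib]
      omega
    rw [hk]
    exact hs _ _ (ih _ hsum)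

/-- Unnormalised basis vectors. -/
def pvec {n : ℕ} (Y : Fin (n + 1) → H →L[ℂ] H) (v : H) (k : Fin n → ℕ) (l : List (Fin n)) : H :=
  l.foldr (fun i x => (star (Y i.castSucc) ^ k i) x) v

/-- The operators `D_i = ∑_{k ≥ i} Y_k^* Y_k`. -/
def Dop {n : ℕ} (Y : Fin (n + 1) → H →L[ℂ] H) (i : Fin (n + 1)) : H →L[ℂ] H :=
  ∑ k ∈ Finset.Ici i, star (Y k) * Y k

/-- Square roots of the eigenvalues of `D_i`. -/
def Mfun {n : ℕ} (a : Fin n → ℝ) (k : Fin n → ℕ) (i : Fin (n + 1)) : ℝ :=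
  ∏ j : Fin n, if j.castSucc < i then a j ^ k j else 1

lemma Mfun_add_single {n : ℕ} (a : Fin n → ℝ) (k : Fin n → ℕ) (i : Fin (n + 1)) (j : Fin n) :
    Mfun a (k + Pi.single j 1) i = Mfun a k i * if j.castSucc < i then a j else 1 := by
  unfold Mfun
  have : ∀ x : Fin n, (if x.castSucc < i then a x ^ (k + Pi.single j 1 : Fin n → ℕ) x else 1) =
      (if x.castSucc < i then a x ^ k x else 1) *
        (if x = j then (if j.castSucc < i then a j else 1) else 1) := by
    intro x
    by_cases hx : x = j
    · subst hx
      by_cases hi : x.castSucc < i <;> simp [hi, pow_succ]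
    · simp [hx]
  simp_rw [this, Finset.prod_mul_distrib]
  simp

lemma Mfun_succ {n : ℕ} (a : Fin n → ℝ) (k : Fin n → ℕ) (j : Fin n) :
    Mfun a k j.succ = Mfun a k j.castSucc * a j ^ k j := by
  unfold Mfun
  have : ∀ x : Fin n, (if x.castSucc < j.succ then a x ^ k x else 1) =
      (if x.castSucc < j.castSucc then a x ^ k x else 1) * (if x = j then a j ^ k j else 1) := by
    intro x
    by_cases hx : x = j
    · subst hx
      simp
    · have : x.castSucc < j.succ ↔ x.castSucc < j.castSucc := by
        rw [Fin.lt_def, Fin.lt_def]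
        have : (x : ℕ) ≠ j := fun h => hx (Fin.ext h)
        simp; omega
      simp [hx, this]
  simp_rw [this, Finset.prod_mul_distrib]
  simp

lemma Mfun_pos {n : ℕ} (a : Fin n → ℝ) (ha : ∀ j, 0 < a j) (k : Fin n → ℕ) (i : Fin (n + 1)) :
    0 < Mfun a k i := by
  unfold Mfun
  refine Finset.prod_pos fun j _ => ?_
  have := ha j
  split_ifs <;> positivity

namespace SigmaRel

variable {n : ℕ} {a : Fin n → ℝ} {Y : Fin (n + 1) → H →L[ℂ] H}

lemma Dop_castSucc (Y : Fin (n + 1) → H →L[ℂ] H) (j : Fin n) :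
    Dop Y j.castSucc = star (Y j.castSucc) * Y j.castSucc + Dop Y j.succ := by
  unfold Dop
  have : Finset.Ici j.castSucc = insert j.castSucc (Finset.Ici j.succ) := by
    ext x
    simp only [Finset.mem_Ici, Finset.mem_insert, Fin.le_def, Fin.ext_iff]
    simp; omega
  rw [this, Finset.sum_insert (by simp)]

lemma Ioi_castSucc (j : Fin n) : Finset.Ioi j.castSucc = Finset.Ici j.succ := by
  ext x
  simp only [Finset.mem_Ici, Finset.mem_Ioi, Fin.le_def, Fin.lt_def]
  simp

lemma Dop_eq (h : SigmaRel a Y) (i : Fin (n + 1)) :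
    Dop Y i = 1 - ∑ k ∈ Finset.Iio i, star (Y k) * Y k := by
  rw [eq_sub_iff_add_eq, ← h.r5, Dop, ← Finset.sum_union]
  · congr 1
    ext x
    simp only [Finset.mem_union, Finset.mem_Ici, Finset.mem_Iio, Finset.mem_univ, iff_true]
    exact le_or_gt i x
  · rw [Finset.disjoint_left]
    intro x hx hx'
    simp only [Finset.mem_Ici, Finset.mem_Iio] at hx hx'
    exact absurd hx (not_le.mpr hx')

lemma Dop_lt (h : SigmaRel a Y) (i : Fin (n + 1)) (j : Fin n) (hij : j.castSucc < i) :
    Dop Y i * star (Y j.castSucc) = ((a j : ℂ) ^ 2) • (star (Y j.castSucc) * Dop Y i) := by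
  unfold Dop
  rw [Finset.sum_mul, Finset.mul_sum, Finset.smul_sum]
  refine Finset.sum_congr rfl fun k hk => ?_
  have hk' : j.castSucc < k := lt_of_lt_of_le hij (Finset.mem_Ici.mp hk)
  rw [mul_assoc, h.s2 j k hk', mul_smul_comm, ← mul_assoc, h.s1 j k hk', smul_mul_assoc, smul_smul,
    mul_assoc, sq]

lemma Dop_ge (h : SigmaRel a Y) (i : Fin (n + 1)) (j : Fin n) (hij : i ≤ j.castSucc) :
    Dop Y i * star (Y j.castSucc) = star (Y j.castSucc) * Dop Y i := by
  rw [h.Dop_eq, mul_sub, sub_mul, mul_one, one_mul, Finset.sum_mul, Finset.mul_sum]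
  congr 1
  refine Finset.sum_congr rfl fun k hk => ?_
  have hk' : k < j.castSucc := lt_of_lt_of_le (Finset.mem_Iio.mp hk) hij
  obtain ⟨k, rfl⟩ : ∃ k' : Fin n, k = k'.castSucc := by
    rcases Fin.eq_castSucc_or_eq_last k with ⟨k', rfl⟩ | rfl
    · exact ⟨k', rfl⟩
    · exact absurd hk' (not_lt.mpr (Fin.le_last _))
  rw [mul_assoc, h.r2 k _ hk', mul_smul_comm, ← mul_assoc, ← mul_assoc, h.s1 k _ hk',
    smul_mul_assoc]

/-- Joint eigenvectors. -/
def Eig (a : Fin n → ℝ) (Y : Fin (n + 1) → H →L[ℂ] H) (lam : ℂ) (k : Fin n → ℕ) (x : H) : Prop :=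
  (∀ i, Dop Y i x = ((Mfun a k i : ℂ) ^ 2) • x) ∧
  Y (Fin.last n) x = (lam * (Mfun a k (Fin.last n) : ℂ)) • x ∧
  star (Y (Fin.last n)) x = (starRingEnd ℂ lam * (Mfun a k (Fin.last n) : ℂ)) • x

lemma Eig.smul {lam : ℂ} {k : Fin n → ℕ} {x : H} (hx : Eig a Y lam k x) (c : ℂ) :
    Eig a Y lam k (c • x) := by
  refine ⟨fun i => ?_, ?_, ?_⟩
  · rw [map_smul, hx.1, smul_comm]
  · rw [map_smul, hx.2.1, smul_comm]
  · rw [map_smul, hx.2.2, smul_comm]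

lemma Eig.step (h : SigmaRel a Y) {lam : ℂ} {k : Fin n → ℕ} {x : H} (hx : Eig a Y lam k x)
    (j : Fin n) : Eig a Y lam (k + Pi.single j 1) (star (Y j.castSucc) x) := by
  refine ⟨fun i => ?_, ?_, ?_⟩
  · rw [Mfun_add_single]
    by_cases hij : j.castSucc < i
    · have := DFunLike.congr_fun (h.Dop_lt i j hij) x
      simp only [mul_apply_eq_comp, _root_.smul_apply, hx.1 i, map_smul] at this
      rw [this, smul_smul, if_pos hij]
      congr 1
      push_cast; ring
    · have := DFunLike.congr_fun (h.Dop_ge i j (not_lt.mp hij)) x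
      simp only [mul_apply_eq_comp, hx.1 i, map_smul] at this
      rw [this, if_neg hij, mul_one]
  · have := DFunLike.congr_fun (h.s2 j _ (Fin.castSucc_lt_last j)) x
    simp only [mul_apply_eq_comp, _root_.smul_apply, hx.2.1, map_smul] at this
    rw [this, smul_smul, Mfun_add_single, if_pos (Fin.castSucc_lt_last j)]
    congr 1
    push_cast; ring
  · have := DFunLike.congr_fun (h.s1 j _ (Fin.castSucc_lt_last j)) x
    simp only [mul_apply_eq_comp, _root_.smul_apply, hx.2.2, map_smul] at this
    rw [this, smul_smul, Mfun_add_single, if_pos (Fin.castSucc_lt_last j)]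
    congr 1
    push_cast; ring

lemma Eig.YY {lam : ℂ} {k : Fin n → ℕ} {x : H} (hx : Eig a Y lam k x)
    (j : Fin n) : star (Y j.castSucc) (Y j.castSucc x) =
      ((Mfun a k j.castSucc : ℂ) ^ 2 * (1 - (a j : ℂ) ^ (2 * k j))) • x := by
  have h1 := DFunLike.congr_fun (Dop_castSucc Y j) x
  rw [_root_.add_apply, hx.1, hx.1, Mfun_succ] at h1
  rw [← mul_apply_eq_comp, ← sub_eq_iff_eq_add.mpr h1, ← sub_smul]
  congr 1
  push_cast; ring

lemma Eig.YYs (h : SigmaRel a Y) {lam : ℂ} {k : Fin n → ℕ} {x : H} (hx : Eig a Y lam k x)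
    (j : Fin n) : Y j.castSucc (star (Y j.castSucc) x) =
      ((Mfun a k j.castSucc : ℂ) ^ 2 * (1 - (a j : ℂ) ^ (2 * (k j + 1)))) • x := by
  have h1 := DFunLike.congr_fun (h.r3 j) x
  rw [Ioi_castSucc, _root_.add_apply, mul_apply_eq_comp, mul_apply_eq_comp, hx.YY, _root_.smul_apply] at h1
  change _ = _ + _ • Dop Y j.succ x at h1
  rw [h1, hx.1, Mfun_succ, smul_smul, ← add_smul]
  congr 1
  push_cast; ring

lemma pvec_congr (Y : Fin (n + 1) → H →L[ℂ] H) (v : H) (k k' : Fin n → ℕ) (l : List (Fin n))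
    (hk : ∀ i ∈ l, k i = k' i) : pvec Y v k l = pvec Y v k' l := by
  induction l with
  | nil => rfl
  | cons m l ih =>
    have h1 := ih fun i hi => hk i (List.mem_cons_of_mem _ hi)
    have h2 := hk m List.mem_cons_self
    unfold pvec at h1 ⊢
    rw [List.foldr_cons, List.foldr_cons, h1, h2]

lemma pvec_step (h : SigmaRel a Y) (v : H) (k : Fin n → ℕ) (i : Fin n) (l : List (Fin n))
    (hl : l.Pairwise (· < ·)) (hi : i ∈ l) :
    ∃ C : ℝ, 0 < C ∧ star (Y i.castSucc) (pvec Y v k l) =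
      (C : ℂ) • pvec Y v (k + Pi.single i 1) l := by
  induction l with
  | nil => simp at hi
  | cons m l ih =>
    rw [List.pairwise_cons] at hl
    have hc : ∀ k', pvec Y v k' (m :: l) = (star (Y m.castSucc) ^ k' m) (pvec Y v k' l) :=
      fun _ => rfl
    rcases List.mem_cons.mp hi with rfl | hil
    · refine ⟨1, one_pos, ?_⟩
      rw [hc, hc, pvec_congr Y v (k + Pi.single i 1) k l]
      · simp [pow_succ']
      · intro x hx
        have : x ≠ i := (hl.1 x hx).ne'
        simp [this]
    · obtain ⟨C, hC, hCe⟩ := ih hl.2 hil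
      have hmi : m < i := hl.1 i hil
      have hp : ∀ r : ℕ, star (Y i.castSucc) * star (Y m.castSucc) ^ r =
          ((a m : ℂ) ^ r) • (star (Y m.castSucc) ^ r * star (Y i.castSucc)) := by
        intro r
        induction r with
        | zero => simp
        | succ r ihr =>
          rw [pow_succ, ← mul_assoc, ihr, smul_mul_assoc, mul_assoc,
            h.s1 m _ (Fin.castSucc_lt_castSucc_iff.mpr hmi), mul_smul_comm, smul_smul, ← mul_assoc,
            pow_succ]
      refine ⟨a m ^ k m * C, mul_pos (pow_pos (h.pos m) _) hC, ?_⟩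
      have := DFunLike.congr_fun (hp (k m)) (pvec Y v k l)
      simp only [mul_apply_eq_comp, _root_.smul_apply, hCe, map_smul] at this
      rw [hc, hc, this, smul_smul]
      have hkm : (k + Pi.single i 1 : Fin n → ℕ) m = k m := by simp [hmi.ne]
      rw [hkm]
      push_cast
      rfl

lemma exists_basis (h : SigmaRel a Y) (lam : ℂ) (v : H) (hlam : ‖lam‖ = 1) (hv : ‖v‖ = 1)
    (hv0 : ∀ j : Fin n, Y j.castSucc v = 0) (hXv : Y (Fin.last n) v = lam • v) :
    ∃ u : (Fin n → ℕ) → H, Orthonormal ℂ u ∧ (∀ k, Eig a Y lam k (u k)) ∧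
      (∀ k i, star (Y i.castSucc) (u k) =
        ((Mfun a k i.castSucc * Real.sqrt (1 - a i ^ (2 * (k i + 1))) : ℝ) : ℂ) •
          u (k + Pi.single i 1)) ∧
      (∀ k i, Y i.castSucc (u (k + Pi.single i 1)) =
        ((Mfun a k i.castSucc * Real.sqrt (1 - a i ^ (2 * (k i + 1))) : ℝ) : ℂ) • u k) ∧
      (∀ k i, k i = 0 → Y i.castSucc (u k) = 0) := by
  set p : (Fin n → ℕ) → H := fun k => pvec Y v k (List.finRange n) with hp
  have hstep : ∀ k i, ∃ C : ℝ, 0 < C ∧ star (Y i.castSucc) (p k) =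
      (C : ℂ) • p (k + Pi.single i 1) := fun k i =>
    h.pvec_step v k i _ (List.pairwise_lt_finRange n) (List.mem_finRange i)
  have hp0 : p 0 = v := by
    have : ∀ l : List (Fin n), pvec Y v 0 l = v := by
      intro l
      induction l with
      | nil => rfl
      | cons m l ih =>
        have hc : pvec Y v 0 (m :: l) = (star (Y m.castSucc) ^ 0) (pvec Y v 0 l) := rfl
        rw [hc, ih]; simp
    exact this _
  have hDv : ∀ i, Dop Y i v = v := by
    intro i
    rw [h.Dop_eq, _root_.sub_apply, _root_.sum_apply, Finset.sum_eq_zero]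
    · simp
    · intro k hk
      rcases Fin.eq_castSucc_or_eq_last k with ⟨k', rfl⟩ | rfl
      · simp [hv0]
      · exact absurd (Finset.mem_Iio.mp hk) (not_lt.mpr (Fin.le_last _))
  have hll : starRingEnd ℂ lam * lam = 1 := by
    rw [mul_comm, Complex.mul_conj']; simp [hlam]
  have hXs : star (Y (Fin.last n)) v = starRingEnd ℂ lam • v := by
    have h1 := hDv (Fin.last n)
    have h2 : Dop Y (Fin.last n) = star (Y (Fin.last n)) * Y (Fin.last n) := by
      unfold Dop
      have : Finset.Ici (Fin.last n) = {Fin.last n} := by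
        ext x; simp [Fin.last_le_iff]
      rw [this, Finset.sum_singleton]
    rw [h2, mul_apply_eq_comp, hXv, map_smul] at h1
    have h3 := congrArg (fun x => starRingEnd ℂ lam • x) h1
    simpa only [smul_smul, hll, one_smul] using h3
  have hM0 : ∀ i, Mfun a 0 i = 1 := by intro i; simp [Mfun]
  have hE : ∀ k, Eig a Y lam k (p k) := by
    apply tuple_induction
    · rw [hp0]
      refine ⟨fun i => ?_, ?_, ?_⟩
      · rw [hDv, hM0]; simp
      · rw [hXv, hM0]; simp
      · rw [hXs, hM0]; simp
    · intro k i hk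
      obtain ⟨C, hC, hCe⟩ := hstep k i
      have : p (k + Pi.single i 1) = ((C : ℂ)⁻¹) • star (Y i.castSucc) (p k) := by
        have : (C : ℂ) ≠ 0 := by exact_mod_cast hC.ne'
        rw [hCe, smul_smul, inv_mul_cancel₀ this, one_smul]
      rw [this]
      exact (hk.step h i).smul _
  have hpow : ∀ (i : Fin n) (m : ℕ), 0 < 1 - a i ^ (2 * (m + 1)) := by
    intro i m
    have := pow_lt_one₀ (h.pos i).le (h.lt1 i) (n := 2 * (m + 1)) (by omega)
    linarith
  set g : (Fin n → ℕ) → Fin n → ℝ := fun k i =>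
    Mfun a k i.castSucc * Real.sqrt (1 - a i ^ (2 * (k i + 1))) with hg
  have hgpos : ∀ k i, 0 < g k i := fun k i =>
    mul_pos (Mfun_pos a h.pos k _) (Real.sqrt_pos.mpr (hpow i (k i)))
  have hgsq : ∀ k i, ((Mfun a k i.castSucc : ℂ) ^ 2 * (1 - (a i : ℂ) ^ (2 * (k i + 1)))) =
      ((g k i ^ 2 : ℝ) : ℂ) := by
    intro k i
    rw [hg]
    simp only
    rw [mul_pow, Real.sq_sqrt (hpow i (k i)).le]
    push_cast; ring
  have hnorm : ∀ k i x, Eig a Y lam k x → ‖star (Y i.castSucc) x‖ = g k i * ‖x‖ := by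
    intro k i x hx
    have h1 : (‖star (Y i.castSucc) x‖ : ℂ) ^ 2 = ((g k i * ‖x‖ : ℝ) : ℂ) ^ 2 := by
      have h2 := inner_self_eq_norm_sq_to_K (𝕜 := ℂ) (star (Y i.castSucc) x)
      have h3 := inner_self_eq_norm_sq_to_K (𝕜 := ℂ) x
      simp only [Complex.coe_algebraMap] at h2 h3
      rw [← h2]
      conv_lhs => rw [star_eq_adjoint, adjoint_inner_left, ← star_eq_adjoint, hx.YYs h, hgsq,
        inner_smul_right, h3]
      push_cast; ring
    have h2 : ‖star (Y i.castSucc) x‖ ^ 2 = (g k i * ‖x‖) ^ 2 := by exact_mod_cast h1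
    exact (pow_left_inj₀ (norm_nonneg _) (mul_nonneg (hgpos k i).le (norm_nonneg _)) two_ne_zero).mp h2
  have hpn : ∀ k, 0 < ‖p k‖ := by
    apply tuple_induction
    · rw [hp0, hv]; exact one_pos
    · intro k i hk
      obtain ⟨C, hC, hCe⟩ := hstep k i
      have h1 := hnorm k i _ (hE k)
      rw [hCe, norm_smul, Complex.norm_real, Real.norm_of_nonneg hC.le] at h1
      have h2 : 0 < C * ‖p (k + Pi.single i 1)‖ := by rw [h1]; exact mul_pos (hgpos k i) hk
      exact pos_of_mul_pos_right h2 hC.le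
  set u : (Fin n → ℕ) → H := fun k => ((‖p k‖⁻¹ : ℝ) : ℂ) • p k with hu
  have hun : ∀ k, ‖u k‖ = 1 := by
    intro k
    simp only [hu]
    rw [norm_smul, Complex.norm_real, Real.norm_of_nonneg (by positivity)]
    exact inv_mul_cancel₀ (hpn k).ne'
  have huE : ∀ k, Eig a Y lam k (u k) := fun k => (hE k).smul _
  have hup : ∀ k i, star (Y i.castSucc) (u k) = ((g k i : ℝ) : ℂ) • u (k + Pi.single i 1) := by
    intro k i
    obtain ⟨C, hC, hCe⟩ := hstep k i
    have h1 := hnorm k i _ (hE k)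
    rw [hCe, norm_smul, Complex.norm_real, Real.norm_of_nonneg hC.le] at h1
    simp only [hu]
    rw [map_smul, hCe, smul_smul, smul_smul, ← Complex.ofReal_mul, ← Complex.ofReal_mul]
    congr 2
    have h2 := (hpn k).ne'
    have h3 := (hpn (k + Pi.single i 1)).ne'
    field_simp
    linarith
  clear_value u
  refine ⟨u, ⟨hun, ?_⟩, huE, hup, ?_, ?_⟩
  · intro k l hkl
    by_contra hin
    apply hkl
    have hM : ∀ i, Mfun a k i = Mfun a l i := by
      intro i
      have hsa : star (Dop Y i) = Dop Y i := by
        unfold Dop; rw [star_sum]; simp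
      have h1 : inner ℂ (Dop Y i (u k)) (u l) = inner ℂ (u k) (Dop Y i (u l)) := by
        conv_lhs => rw [← hsa, star_eq_adjoint, adjoint_inner_left]
      rw [(huE k).1, (huE l).1, inner_smul_left, inner_smul_right] at h1
      have h2 := mul_right_cancel₀ hin h1
      rw [map_pow, Complex.conj_ofReal] at h2
      have h3 : Mfun a k i ^ 2 = Mfun a l i ^ 2 := by exact_mod_cast h2
      exact (pow_left_inj₀ (Mfun_pos a h.pos k i).le (Mfun_pos a h.pos l i).le two_ne_zero).mp h3
    funext j
    have h1 := hM j.succ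
    rw [Mfun_succ, Mfun_succ, hM j.castSucc] at h1
    have h2 := mul_left_cancel₀ (Mfun_pos a h.pos l _).ne' h1
    exact pow_right_injective₀ (h.pos j) (h.lt1 j).ne h2
  · intro k i
    have h1 := (huE k).YYs h i
    rw [hup, map_smul, hgsq, sq, Complex.ofReal_mul (g k i) (g k i), ← smul_smul] at h1
    have : ((g k i : ℝ) : ℂ) ≠ 0 := by exact_mod_cast (hgpos k i).ne'
    exact smul_right_injective H this h1
  · intro k i hki
    have h1 := (huE k).YY i
    rw [hki] at h1
    simp only [mul_zero, pow_zero, sub_self, zero_smul] at h1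
    have : inner ℂ (Y i.castSucc (u k)) (Y i.castSucc (u k)) = 0 := by
      rw [← adjoint_inner_left, ← star_eq_adjoint, h1, inner_zero_left]
    exact inner_self_eq_zero.mp this

end SigmaRel

end PartThree

section PartFour

variable {H : Type*} [NormedAddCommGroup H] [InnerProductSpace ℂ H] [CompleteSpace H]

/-- The weights: `2` at the last index, `1` elsewhere. -/
def wt (n : ℕ) (j : Fin n) : ℕ := if (j : ℕ) + 1 = n then 2 else 1

lemma sigmaRel_of_family (q : ℝ) (hq0 : 0 < q) (hq1 : q < 1) {n : ℕ}
    (Y : Fin (n + 1) → H →L[ℂ] H) (hY : IsSigmaQFamily q Y) :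
    SigmaRel (fun j => q ^ wt n j) Y := by
  obtain ⟨h1, h2, h3, h4, h5⟩ := hY
  simp only [← star_eq_adjoint] at h1 h2 h3 h4 h5
  have hqc : (q : ℂ) ≠ 0 := by exact_mod_cast hq0.ne'
  have main : ∀ (j : Fin n) (i : Fin (n + 1)), j.castSucc < i →
      Y i * Y j.castSucc = ((q : ℂ) ^ wt n j)⁻¹ • (Y j.castSucc * Y i) ∧
      star (Y i) * Y j.castSucc = ((q : ℂ) ^ wt n j)⁻¹ • (Y j.castSucc * star (Y i)) := by
    intro j i hij
    have hij' : (j : ℕ) < i := hij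
    by_cases hjn : (j : ℕ) + 1 = n
    · have hi : i = Fin.last n := by
        apply Fin.ext
        have := i.isLt
        simp only [Fin.val_last]
        omega
      subst hi
      have := h2 j.castSucc hjn
      rw [wt, if_pos hjn, ← inv_pow]
      exact this
    · have := h1 i j.castSucc hij (fun hc => hjn hc.2)
      rw [wt, if_neg hjn, pow_one]
      exact this
  have hw : ∀ j : Fin n, (q : ℂ) ^ wt n j ≠ 0 := fun j => pow_ne_zero _ hqc
  refine ⟨fun j => by positivity, fun j => ?_, fun j i hij => ?_, fun j i hij => ?_, fun j => ?_,
    ?_, h5⟩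
  · apply pow_lt_one₀ hq0.le hq1
    unfold wt; split_ifs <;> norm_num
  · rw [(main j i hij).1, smul_smul, Complex.ofReal_pow, mul_inv_cancel₀ (hw j), one_smul]
  · rw [(main j i hij).2, smul_smul, Complex.ofReal_pow, mul_inv_cancel₀ (hw j), one_smul]
  · by_cases hjn : (j : ℕ) + 1 = n
    · have := h4 j.castSucc hjn
      rw [sub_eq_iff_eq_add'] at this
      rw [this]
      have hI : Finset.Ioi j.castSucc = {Fin.last n} := by
        ext x
        have := x.isLt
        simp only [Finset.mem_Ioi, Finset.mem_singleton, Fin.lt_def, Fin.ext_iff, Fin.val_last,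
          Fin.val_castSucc]
        omega
      rw [hI, Finset.sum_singleton]
      simp only [wt, if_pos hjn]
      congr 2
      push_cast; ring
    · have := h3 j.castSucc hjn
      rw [sub_eq_iff_eq_add'] at this
      rw [this]
      simp only [wt, if_neg hjn]
      congr 2
      push_cast; ring
  · have := h3 (Fin.last n) (by simp)
    have hI : Finset.Ioi (Fin.last n) = ∅ := by
      ext x
      simp [Fin.le_last]
    rw [hI, Finset.sum_empty, smul_zero, sub_eq_zero] at this
    exact this

lemma Mfun_castSucc (q : ℝ) {n : ℕ} (k : Fin n → ℕ) (i : Fin n) :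
    Mfun (fun j => q ^ wt n j) k i.castSucc = q ^ (∑ j ∈ Finset.Iio i, k j) := by
  unfold Mfun
  rw [← Finset.prod_filter, ← Finset.prod_pow_eq_pow_sum]
  refine Finset.prod_congr ?_ fun j hj => ?_
  · ext x; simp
  · have h1 : j < i := by simpa using hj
    have h2 : (j : ℕ) < i := h1
    have := i.isLt
    have h3 : wt n j = 1 := by rw [wt, if_neg (by omega)]
    simp [h3]

lemma Mfun_last (q : ℝ) {n : ℕ} (k : Fin n → ℕ) :
    Mfun (fun j => q ^ wt n j) k (Fin.last n) =
      q ^ (∑ j : Fin n, if (j : ℕ) + 1 = n then 2 * k j else k j) := by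
  unfold Mfun
  rw [← Finset.prod_pow_eq_pow_sum]
  refine Finset.prod_congr rfl fun j _ => ?_
  rw [if_pos (Fin.castSucc_lt_last j)]
  simp only [wt]
  rw [← pow_mul]
  split_ifs <;> simp

end PartFour

/-- Proposition 3 of the paper: every irreducible `Σ_q`-family with `Y_{n+1} ≠ 0`
is unitarily equivalent to some `π_λ` with `|λ| = 1`. -/
theorem irreducible_family_unitarily_equivalent
    (q : ℝ) (hq0 : 0 < q) (hq1 : q < 1) (n : ℕ) (hn : 1 ≤ n)
    {H : Type*} [NormedAddCommGroup H] [InnerProductSpace ℂ H] [CompleteSpace H]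
    (Y : Fin (n + 1) → H →L[ℂ] H) (hY : IsSigmaQFamily q Y)
    (hirr : IsIrreducibleFamily Y) (hne : Y (Fin.last n) ≠ 0) :
    ∃ (lam : ℂ), ‖lam‖ = 1 ∧
      ∃ (Z : Fin (n + 1) → lpH n →L[ℂ] lpH n) (U : H ≃ₗᵢ[ℂ] lpH n),
        IsPiRep q lam Z ∧ ∀ (i : Fin (n + 1)) (x : H), U (Y i x) = Z i (U x) := by
  have hR := sigmaRel_of_family q hq0 hq1 Y hY
  have hwt : ∀ j : Fin n, wt n j ≠ 0 := fun j => by unfold wt; split_ifs <;> norm_num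
  obtain ⟨lam, v, hlam, hv, hv0, hXv⟩ := hR.exists_vacuum_eigen q hq0.le hq1
    (fun j => pow_le_of_le_one hq0.le hq1.le (hwt j)) hirr hne
  obtain ⟨u, hu, hE, hup, hdown, hzero⟩ := hR.exists_basis lam v hlam hv hv0 hXv
  have hmem : ∀ k, u k ∈ Submodule.span ℂ (Set.range u) := fun k =>
    Submodule.subset_span ⟨k, rfl⟩
  have hinv : ∀ T : H →L[ℂ] H, (∀ k, T (u k) ∈ Submodule.span ℂ (Set.range u)) →
      ∀ x ∈ (Submodule.span ℂ (Set.range u)).topologicalClosure,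
        T x ∈ (Submodule.span ℂ (Set.range u)).topologicalClosure := by
    intro T hT x hx
    have hspan : ∀ y ∈ Submodule.span ℂ (Set.range u), T y ∈ Submodule.span ℂ (Set.range u) := by
      intro y hy
      have : Submodule.span ℂ (Set.range u) ≤
          (Submodule.span ℂ (Set.range u)).comap T.toLinearMap := by
        rw [Submodule.span_le]
        rintro _ ⟨k, rfl⟩
        exact hT k
      exact this hy
    exact map_mem_closure T.continuous hx hspan
  have hdec : ∀ (k : Fin n → ℕ) (i : Fin n), k i ≠ 0 →
      k = Function.update k i (k i - 1) + Pi.single i 1 := by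
    intro k i hk
    funext j
    by_cases hj : j = i
    · subst hj; simp; omega
    · simp [hj]
  have htop : (Submodule.span ℂ (Set.range u)).topologicalClosure = ⊤ := by
    rcases hirr (Submodule.span ℂ (Set.range u)).topologicalClosure
      (Submodule.isClosed_topologicalClosure _) (by
        intro i x hx
        rw [← star_eq_adjoint]
        rcases Fin.eq_castSucc_or_eq_last i with ⟨j, rfl⟩ | rfl
        · refine ⟨hinv _ (fun k => ?_) x hx, hinv _ (fun k => ?_) x hx⟩
          · by_cases hk : k j = 0
            · rw [hzero k j hk]; exact Submodule.zero_mem _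
            · rw [hdec k j hk, hdown]
              exact Submodule.smul_mem _ _ (hmem _)
          · rw [hup]
            exact Submodule.smul_mem _ _ (hmem _)
        · refine ⟨hinv _ (fun k => ?_) x hx, hinv _ (fun k => ?_) x hx⟩
          · rw [(hE k).2.1]
            exact Submodule.smul_mem _ _ (hmem _)
          · rw [(hE k).2.2]
            exact Submodule.smul_mem _ _ (hmem _)) with hb | ht
    · exfalso
      have h1 : u 0 ∈ (Submodule.span ℂ (Set.range u)).topologicalClosure :=
        Submodule.le_topologicalClosure _ (hmem 0)
      rw [hb, Submodule.mem_bot] at h1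
      have := hu.1 0
      rw [h1, norm_zero] at this
      exact zero_ne_one this
    · exact ht
  set b : HilbertBasis (Fin n → ℕ) ℂ H := HilbertBasis.mk hu htop.ge with hb
  have hbu : ∀ k, b k = u k := fun k => congrFun (HilbertBasis.coe_mk hu htop.ge) k
  have hrep : ∀ k, b.repr (u k) = basisE k := by
    intro k
    rw [← hbu, HilbertBasis.repr_self, basisE]
  have hsym : ∀ k, b.repr.symm (basisE k) = u k := by
    intro k
    rw [← hrep, LinearIsometryEquiv.symm_apply_apply]
  let Z : Fin (n + 1) → lpH n →L[ℂ] lpH n := fun i =>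
    (b.repr.toContinuousLinearEquiv : H →L[ℂ] lpH n) ∘L Y i ∘L
      (b.repr.symm.toContinuousLinearEquiv : lpH n →L[ℂ] H)
  have hZ : ∀ i x, Z i x = b.repr (Y i (b.repr.symm x)) := fun i x => rfl
  have hYu : ∀ (k : Fin n → ℕ) (i : Fin n), Y i.castSucc (u k) =
      ((q ^ (∑ j ∈ Finset.Iio i, k j) * Real.sqrt (1 - (q ^ wt n i) ^ (2 * k i)) : ℝ) : ℂ) •
        u (Function.update k i (k i - 1)) := by
    intro k i
    by_cases hk : k i = 0
    · rw [hzero k i hk, hk]; simp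
    · have h1 := hdown (Function.update k i (k i - 1)) i
      rw [← hdec k i hk, Mfun_castSucc] at h1
      rw [h1]
      have h2 : ∑ j ∈ Finset.Iio i, Function.update k i (k i - 1) j = ∑ j ∈ Finset.Iio i, k j := by
        refine Finset.sum_congr rfl fun j hj => ?_
        rw [Function.update_of_ne (Finset.mem_Iio.mp hj).ne]
      have h3 : Function.update k i (k i - 1) i + 1 = k i := by
        rw [Function.update_self]; omega
      rw [h2, h3]
  refine ⟨lam, hlam, Z, b.repr, ⟨?_, ?_, ?_⟩, ?_⟩
  · intro i hi k
    rw [hZ, hsym, hYu, map_smul, hrep, wt, if_neg hi.ne, pow_one]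
  · intro i hi k
    rw [hZ, hsym, hYu, map_smul, hrep, wt, if_pos hi, ← pow_mul]
    congr 6
    ring
  · intro k
    rw [hZ, hsym, (hE k).2.1, map_smul, hrep, Mfun_last, Complex.ofReal_pow]
  · intro i x
    rw [hZ, LinearIsometryEquiv.symm_apply_apply]
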